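/- arXiv:math/0510150 — 4 statements merged into one kernel-verified Lean document; each statement's English description precedes it below -/
import Mathlib

section
/- Let {e₁,e₂,e₃} be the standard orthonormal basis of V = ℝ³ and suppose (K,S) is in SO(2)-canonical form with parameters (λ,a,b) with λ > 0. Then the stabilizer of (K,S) in SO(3) is exactly the group of all rotations about the axis e₁ (isomorphic to SO(2)). -/
/-!
An element `g` of the stabilizer sends `e₁` to a unit vector `v` with `K(v,v) = 2λv`. Writing
`v = (x,y,z)`, the last two coordinates of this equation give `(1+x)y = (1+x)z = 0` and the first
one `3x² - 1 = 2x` (using `|v| = 1`); `x = -1` violates the latter, hence `y = z = 0`, so `x² = 1`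
and `v = e₁`. So `g` fixes `e₁`, acts on the plane `e₁^⊥` as an isometry
of determinant one, and is a rotation (`stab_subset_rotSet`). Conversely, in coordinates
`K(X,Y)` and `SX` are visibly invariant under rotations about `e₁` (`rotSet_subset_stab`).
The isomorphism with `SO(2)` comes from the injective homomorphism `so2Hom`, `A ↦ 1 ⊕ A`, whose
range is the set of these rotations (`range_so2Hom`).
-/

/-!
Setting (affine hypersurfaces admitting a pointwise symmetry, algebraic part):
`V₃ = ℝ³` with its standard inner product `h = ⟪·,·⟫`.  `K` is a symmetric bilinear
map `V₃ × V₃ → V₃` whose cubic form `h(K(X,Y),Z)` is totally symmetric and which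
satisfies the apolarity condition (`K_X` trace-free), `S` is an `h`-symmetric
endomorphism.  `stab K S` is the stabilizer of the pair `(K,S)` inside `SO(3)`.
-/

noncomputable section

open scoped RealInnerProductSpace

/-- The 3-dimensional Euclidean space `ℝ³` with its standard inner product. -/
abbrev V₃ := EuclideanSpace ℝ (Fin 3)

/-- A symmetric bilinear map `K` is admissible (a difference tensor) if the cubic form
`(X,Y,Z) ↦ ⟪K X Y, Z⟫` is totally symmetric and `K_X := K X ·` is trace-free for all `X`. -/
def IsAdmissibleK (K : V₃ →ₗ[ℝ] V₃ →ₗ[ℝ] V₃) : Prop :=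
  (∀ X Y, K X Y = K Y X) ∧
  (∀ X Y Z, ⟪K X Y, Z⟫ = ⟪K X Z, Y⟫) ∧
  (∀ X, LinearMap.trace ℝ V₃ (K X) = 0)

/-- `S` is a symmetric endomorphism with respect to the inner product. -/
def IsSymmEndo (S : V₃ →ₗ[ℝ] V₃) : Prop := ∀ X Y, ⟪S X, Y⟫ = ⟪X, S Y⟫

/-- The stabilizer of the pair `(K,S)` inside `SO(3)`: all orientation-preserving
(i.e. determinant `1`) linear isometries `g` of `ℝ³` with `K(gX,gY) = g(K(X,Y))`
and `S(gX) = g(SX)` for all `X, Y`. -/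
def stab (K : V₃ →ₗ[ℝ] V₃ →ₗ[ℝ] V₃) (S : V₃ →ₗ[ℝ] V₃) : Set (V₃ ≃ₗᵢ[ℝ] V₃) :=
  {g | LinearMap.det (g.toLinearEquiv : V₃ →ₗ[ℝ] V₃) = 1 ∧
    (∀ X Y, K (g X) (g Y) = g (K X Y)) ∧ (∀ X, S (g X) = g (S X))}

/-- The matrix of `g` with respect to the orthonormal basis `e`: column `j` consists of
the coordinates of `g (e j)` in the basis `e`. -/
def matrixOf (e : OrthonormalBasis (Fin 3) ℝ V₃) (g : V₃ ≃ₗᵢ[ℝ] V₃) :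
    Matrix (Fin 3) (Fin 3) ℝ :=
  Matrix.of fun i j => ⟪e i, g (e j)⟫

/-- The standard orthonormal basis `{e₁, e₂, e₃}` of `ℝ³`. -/
def stdB : OrthonormalBasis (Fin 3) ℝ V₃ := EuclideanSpace.basisFun (Fin 3) ℝ

/-- Matrix of the rotation by angle `θ` about the first basis vector `e₁`. -/
def rotMat (θ : ℝ) : Matrix (Fin 3) (Fin 3) ℝ :=
  !![1, 0, 0; 0, Real.cos θ, -Real.sin θ; 0, Real.sin θ, Real.cos θ]

/-- Matrix of the rotation by angle `π` about the axis `cos (θ/2) e₂ + sin (θ/2) e₃`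
in the plane orthogonal to `e₁`. -/
def flipMat (θ : ℝ) : Matrix (Fin 3) (Fin 3) ℝ :=
  !![-1, 0, 0; 0, Real.cos θ, Real.sin θ; 0, Real.sin θ, -Real.cos θ]

/-- The set of all rotations about the axis `e 0` (the first vector of the basis `e`). -/
def rotSet (e : OrthonormalBasis (Fin 3) ℝ V₃) : Set (V₃ ≃ₗᵢ[ℝ] V₃) :=
  {g | ∃ θ : ℝ, matrixOf e g = rotMat θ}

/-- The set of all rotations by angle `π` about axes orthogonal to `e 0`. -/
def flipSet (e : OrthonormalBasis (Fin 3) ℝ V₃) : Set (V₃ ≃ₗᵢ[ℝ] V₃) :=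
  {g | ∃ θ : ℝ, matrixOf e g = flipMat θ}

/-- The whole of `SO(3)`, as a set of linear isometries of `ℝ³`. -/
def so3Set : Set (V₃ ≃ₗᵢ[ℝ] V₃) :=
  {g | LinearMap.det (g.toLinearEquiv : V₃ →ₗ[ℝ] V₃) = 1}

/-- Matrix of `P₁`, the rotation by angle `π` about `e₁`. -/
def P1mat : Matrix (Fin 3) (Fin 3) ℝ := !![1, 0, 0; 0, -1, 0; 0, 0, -1]

/-- Matrix of `P₂`, the rotation by angle `π` about `e₂`. -/
def P2mat : Matrix (Fin 3) (Fin 3) ℝ := !![-1, 0, 0; 0, 1, 0; 0, 0, -1]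

/-- Matrix of `P₃`, the rotation by angle `π` about `e₃`. -/
def P3mat : Matrix (Fin 3) (Fin 3) ℝ := !![-1, 0, 0; 0, -1, 0; 0, 0, 1]

/-- Matrix of `R₁`, the rotation by angle `2π/3` about `e₁`. -/
def R1mat : Matrix (Fin 3) (Fin 3) ℝ :=
  !![1, 0, 0; 0, -(1/2), -(Real.sqrt 3/2); 0, Real.sqrt 3/2, -(1/2)]

/-- Matrix of `R₃`, the rotation by angle `2π/3` about `e₃`. -/
def R3mat : Matrix (Fin 3) (Fin 3) ℝ :=
  !![-(1/2), -(Real.sqrt 3/2), 0; Real.sqrt 3/2, -(1/2), 0; 0, 0, 1]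

/-- Matrix of `Q`, the rotation by angle `2π/3` about the axis `e₁ + e₂ + e₃`
(the cyclic permutation `e₁ ↦ e₂ ↦ e₃ ↦ e₁`). -/
def Qmat : Matrix (Fin 3) (Fin 3) ℝ := !![0, 0, 1; 1, 0, 0; 0, 1, 0]

/-- The matrices of the Klein four-group `{id, P₁, P₂, P₃} ≅ Z₂ × Z₂`. -/
def kleinMatSet : Set (Matrix (Fin 3) (Fin 3) ℝ) := {1, P1mat, P2mat, P3mat}

/-- The matrices of the order-6 group `⟨P₁, R₃⟩ ≅ S₃`. -/
def s3MatSet : Set (Matrix (Fin 3) (Fin 3) ℝ) :=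
  {1, R3mat, R3mat * R3mat, P1mat, P1mat * R3mat, R3mat * P1mat}

/-- The matrices of the order-12 group `⟨P₁, P₂, Q⟩ ≅ A₄`. -/
def a4MatSet : Set (Matrix (Fin 3) (Fin 3) ℝ) :=
  {1, P1mat, P2mat, P3mat, Qmat, Qmat * Qmat,
   P1mat * Qmat, P2mat * Qmat, P3mat * Qmat,
   Qmat * Qmat * P1mat, Qmat * Qmat * P2mat, Qmat * Qmat * P3mat}

/-- The matrices of the order-3 group `{id, R₁, R₁²} ≅ Z₃`. -/
def z3MatSet : Set (Matrix (Fin 3) (Fin 3) ℝ) := {1, R1mat, R1mat * R1mat}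

/-- The matrices of the order-2 group `{id, P₁} ≅ Z₂`. -/
def z2MatSet : Set (Matrix (Fin 3) (Fin 3) ℝ) := {1, P1mat}

/-- The pair `(K,S)` is in `Z₂`-canonical form with parameters `(lam, mu, a, b, c, d)`
with respect to the orthonormal basis `e`. -/
def Z2Form (K : V₃ →ₗ[ℝ] V₃ →ₗ[ℝ] V₃) (S : V₃ →ₗ[ℝ] V₃)
    (e : OrthonormalBasis (Fin 3) ℝ V₃) (lam mu a b c d : ℝ) : Prop :=
  K (e 0) (e 0) = (2*lam) • e 0 ∧
  K (e 0) (e 1) = (-lam) • e 1 + mu • e 2 ∧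
  K (e 0) (e 2) = mu • e 1 + (-lam) • e 2 ∧
  K (e 1) (e 1) = (-lam) • e 0 ∧
  K (e 1) (e 2) = mu • e 0 ∧
  K (e 2) (e 2) = (-lam) • e 0 ∧
  S (e 0) = a • e 0 ∧ S (e 1) = b • e 1 + d • e 2 ∧ S (e 2) = d • e 1 + c • e 2

/-- The pair `(K,S)` is in `Z₃`-canonical form with parameters `(lam, mu, a, b)`
with respect to the orthonormal basis `e`. -/
def Z3Form (K : V₃ →ₗ[ℝ] V₃ →ₗ[ℝ] V₃) (S : V₃ →ₗ[ℝ] V₃)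
    (e : OrthonormalBasis (Fin 3) ℝ V₃) (lam mu a b : ℝ) : Prop :=
  K (e 0) (e 0) = (2*lam) • e 0 ∧
  K (e 0) (e 1) = (-lam) • e 1 ∧
  K (e 0) (e 2) = (-lam) • e 2 ∧
  K (e 1) (e 1) = (-lam) • e 0 + mu • e 1 ∧
  K (e 1) (e 2) = (-mu) • e 2 ∧
  K (e 2) (e 2) = (-lam) • e 0 + (-mu) • e 1 ∧
  S (e 0) = a • e 0 ∧ S (e 1) = b • e 1 ∧ S (e 2) = b • e 2

/-- The pair `(K,S)` is in `SO(2)`-canonical form with parameters `(lam, a, b)`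
with respect to the orthonormal basis `e`. -/
def SO2Form (K : V₃ →ₗ[ℝ] V₃ →ₗ[ℝ] V₃) (S : V₃ →ₗ[ℝ] V₃)
    (e : OrthonormalBasis (Fin 3) ℝ V₃) (lam a b : ℝ) : Prop :=
  K (e 0) (e 0) = (2*lam) • e 0 ∧
  K (e 0) (e 1) = (-lam) • e 1 ∧
  K (e 0) (e 2) = (-lam) • e 2 ∧
  K (e 1) (e 1) = (-lam) • e 0 ∧
  K (e 1) (e 2) = 0 ∧
  K (e 2) (e 2) = (-lam) • e 0 ∧
  S (e 0) = a • e 0 ∧ S (e 1) = b • e 1 ∧ S (e 2) = b • e 2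

/-- The pair `(K,S)` is in orthogonal-triple canonical form with parameters `(lam, a, b, c)`
with respect to the orthonormal basis `e`. -/
def OTForm (K : V₃ →ₗ[ℝ] V₃ →ₗ[ℝ] V₃) (S : V₃ →ₗ[ℝ] V₃)
    (e : OrthonormalBasis (Fin 3) ℝ V₃) (lam a b c : ℝ) : Prop :=
  K (e 0) (e 0) = 0 ∧ K (e 1) (e 1) = 0 ∧ K (e 2) (e 2) = 0 ∧
  K (e 0) (e 1) = lam • e 2 ∧
  K (e 0) (e 2) = lam • e 1 ∧
  K (e 1) (e 2) = lam • e 0 ∧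
  S (e 0) = a • e 0 ∧ S (e 1) = b • e 1 ∧ S (e 2) = c • e 2

/-- The pair `(K,S)` is in `S₃`-canonical form with parameters `(lam, a, b)`
with respect to the orthonormal basis `e`. -/
def S3Form (K : V₃ →ₗ[ℝ] V₃ →ₗ[ℝ] V₃) (S : V₃ →ₗ[ℝ] V₃)
    (e : OrthonormalBasis (Fin 3) ℝ V₃) (lam a b : ℝ) : Prop :=
  K (e 0) (e 0) = lam • e 0 ∧
  K (e 0) (e 1) = (-lam) • e 1 ∧
  K (e 1) (e 1) = (-lam) • e 0 ∧
  K (e 0) (e 2) = 0 ∧ K (e 1) (e 2) = 0 ∧ K (e 2) (e 2) = 0 ∧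
  S (e 0) = a • e 0 ∧ S (e 1) = a • e 1 ∧ S (e 2) = b • e 2

lemma exists_cos_sin {c s : ℝ} (h : c ^ 2 + s ^ 2 = 1) :
    ∃ θ : ℝ, c = Real.cos θ ∧ s = Real.sin θ := by
  have hn : ‖(⟨c, s⟩ : ℂ)‖ = 1 := by
    rw [Complex.norm_def, Complex.normSq_mk, ← pow_two, ← pow_two, h, Real.sqrt_one]
  refine ⟨Complex.arg ⟨c, s⟩, ?_, ?_⟩
  · rw [Complex.cos_arg (by rw [← norm_ne_zero_iff, hn]; exact one_ne_zero), hn, div_one]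
  · rw [Complex.sin_arg, hn, div_one]

lemma stdB_apply (i j : Fin 3) : (stdB i) j = if j = i then 1 else 0 := by
  simp [stdB, EuclideanSpace.basisFun_apply]

lemma eq_sum_stdB (X : V₃) : X = X 0 • stdB 0 + X 1 • stdB 1 + X 2 • stdB 2 := by
  ext i
  fin_cases i <;> simp [stdB_apply]

lemma matrixOf_stdB_apply (g : V₃ ≃ₗᵢ[ℝ] V₃) (i j : Fin 3) :
    matrixOf stdB g i j = (g (stdB j)) i := by
  simp [matrixOf, stdB, EuclideanSpace.basisFun_apply, EuclideanSpace.inner_single_left]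

lemma det_eq_det_matrixOf (g : V₃ ≃ₗᵢ[ℝ] V₃) :
    LinearMap.det (g.toLinearEquiv : V₃ →ₗ[ℝ] V₃) = (matrixOf stdB g).det := by
  rw [← LinearMap.det_toMatrix stdB.toBasis]
  congr 1
  ext i j
  simp [LinearMap.toMatrix_apply, OrthonormalBasis.repr_apply_apply, matrixOf]

lemma inner_eq_coords (X Y : V₃) : ⟪X, Y⟫ = X 0 * Y 0 + X 1 * Y 1 + X 2 * Y 2 := by
  simp [PiLp.inner_apply, Fin.sum_univ_three]
  ring

section Coordinates

variable {K : V₃ →ₗ[ℝ] V₃ →ₗ[ℝ] V₃} {S : V₃ →ₗ[ℝ] V₃} {lam a b : ℝ}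

lemma K_coords (hK : IsAdmissibleK K) (hform : SO2Form K S stdB lam a b) (X Y : V₃) :
    K X Y = (lam * (2 * X 0 * Y 0 - X 1 * Y 1 - X 2 * Y 2)) • stdB 0
      + (-lam * (X 0 * Y 1 + X 1 * Y 0)) • stdB 1
      + (-lam * (X 0 * Y 2 + X 2 * Y 0)) • stdB 2 := by
  obtain ⟨h00, h01, h02, h11, h12, h22, -⟩ := hform
  have h10 := (hK.1 (stdB 1) (stdB 0)).trans h01
  have h20 := (hK.1 (stdB 2) (stdB 0)).trans h02
  have h21 := (hK.1 (stdB 2) (stdB 1)).trans h12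
  conv_lhs => rw [eq_sum_stdB X, eq_sum_stdB Y]
  simp only [map_add, map_smul, LinearMap.add_apply, LinearMap.smul_apply,
    h00, h01, h02, h10, h11, h12, h20, h21, h22]
  module

lemma S_coords (hform : SO2Form K S stdB lam a b) (X : V₃) :
    S X = (a * X 0) • stdB 0 + (b * X 1) • stdB 1 + (b * X 2) • stdB 2 := by
  obtain ⟨-, -, -, -, -, -, h0, h1, h2⟩ := hform
  conv_lhs => rw [eq_sum_stdB X]
  simp only [map_add, map_smul, h0, h1, h2]
  module

lemma apply_of_matrixOf_eq_rotMat {g : V₃ ≃ₗᵢ[ℝ] V₃} {θ : ℝ}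
    (hg : matrixOf stdB g = rotMat θ) (X : V₃) :
    g X = X 0 • stdB 0 + (Real.cos θ * X 1 - Real.sin θ * X 2) • stdB 1
      + (Real.sin θ * X 1 + Real.cos θ * X 2) • stdB 2 := by
  have key : ∀ i j, (g (stdB j)) i = rotMat θ i j := fun i j => by
    rw [← matrixOf_stdB_apply, hg]
  conv_lhs => rw [eq_sum_stdB X]
  simp only [map_add, map_smul]
  ext i
  fin_cases i <;> simp [key, stdB_apply, rotMat] <;> ring

lemma rotSet_subset_stab (hK : IsAdmissibleK K) (hform : SO2Form K S stdB lam a b) :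
    rotSet stdB ⊆ stab K S := by
  rintro g ⟨θ, hg⟩
  have hcs := Real.sin_sq_add_cos_sq θ
  refine ⟨?_, fun X Y => ?_, fun X => ?_⟩
  · rw [det_eq_det_matrixOf, hg]
    simp [rotMat, Matrix.det_fin_three]
    linarith
  · simp only [K_coords hK hform, apply_of_matrixOf_eq_rotMat hg]
    ext i
    fin_cases i
    · simp [stdB_apply, -mul_eq_mul_left_iff]
      linear_combination (-lam * (X 1 * Y 1 + X 2 * Y 2)) * hcs
    · simp [stdB_apply]
      ring
    · simp [stdB_apply]
      ring
  · simp only [S_coords hform, apply_of_matrixOf_eq_rotMat hg]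
    ext i
    fin_cases i <;> simp [stdB_apply] <;> ring

lemma stab_subset_rotSet (hK : IsAdmissibleK K) (hlam : 0 < lam)
    (hform : SO2Form K S stdB lam a b) : stab K S ⊆ rotSet stdB := by
  rintro g ⟨hdet, hgK, -⟩
  have horth : ∀ i j, ⟪g (stdB i), g (stdB j)⟫ = if i = j then (1 : ℝ) else 0 := fun i j => by
    rw [g.inner_map_map, stdB.inner_eq_ite]
  simp only [inner_eq_coords] at horth
  have h00 := horth 0 0
  have h01 := horth 0 1
  have h02 := horth 0 2
  have h11 := horth 1 1
  have h22 := horth 2 2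
  have h12 := horth 1 2
  have hv : K (g (stdB 0)) (g (stdB 0)) = (2 * lam) • g (stdB 0) := by
    rw [hgK, hform.1, map_smul]
  rw [K_coords hK hform] at hv
  have hv0 := congrArg (fun v : V₃ => v 0) hv
  have hv1 := congrArg (fun v : V₃ => v 1) hv
  have hv2 := congrArg (fun v : V₃ => v 2) hv
  rw [det_eq_det_matrixOf, Matrix.det_fin_three] at hdet
  simp only [matrixOf_stdB_apply] at hdet
  simp [stdB_apply] at h00 h01 h02 h11 h22 h12 hv0 hv1 hv2
  have hne := hlam.ne'
  have hx : (g (stdB 0)) 0 = 1 ∧ (g (stdB 0)) 1 = 0 ∧ (g (stdB 0)) 2 = 0 := by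
    generalize (g (stdB 0)) 0 = x at *
    generalize (g (stdB 0)) 1 = y at *
    generalize (g (stdB 0)) 2 = z at *
    have e0 : 3 * x ^ 2 - 1 = 2 * x := by
      apply mul_left_cancel₀ hne
      linear_combination hv0 + lam * h00
    have e1 : (1 + x) * y = 0 := by
      apply mul_left_cancel₀ hne
      linear_combination -hv1 / 2
    have e2 : (1 + x) * z = 0 := by
      apply mul_left_cancel₀ hne
      linear_combination -hv2 / 2
    have hx1 : 1 + x ≠ 0 := fun h => by
      have : x = -1 := by linarith
      subst this
      norm_num at e0
    have hy := (mul_eq_zero.1 e1).resolve_left hx1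
    have hz := (mul_eq_zero.1 e2).resolve_left hx1
    subst hy hz
    refine ⟨?_, rfl, rfl⟩
    have : (1 + x) * (x - 1) = 0 := by linear_combination h00
    linarith [(mul_eq_zero.1 this).resolve_left hx1]
  obtain ⟨hx, hy, hz⟩ := hx
  simp only [hx, hy, hz] at hdet h01 h02
  have hp : (g (stdB 1)) 0 = 0 := by linarith
  have hq : (g (stdB 2)) 0 = 0 := by linarith
  simp only [hp, hq] at hdet h11 h12
  have hcs : (g (stdB 1)) 1 ^ 2 + (g (stdB 1)) 2 ^ 2 = 1 := by linarith
  -- The second column is `(c, s)`; the third is its rotation by a right angle.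
  have hc : (g (stdB 2)) 2 = (g (stdB 1)) 1 := by
    linear_combination (g (stdB 1)) 1 * hdet + (g (stdB 1)) 2 * h12 - (g (stdB 2)) 2 * hcs
  have hs : (g (stdB 2)) 1 = -(g (stdB 1)) 2 := by
    linear_combination -(g (stdB 1)) 2 * hdet + (g (stdB 1)) 1 * h12 - (g (stdB 2)) 1 * hcs
  obtain ⟨θ, hcos, hsin⟩ : ∃ θ : ℝ, (g (stdB 1)) 1 = Real.cos θ ∧ (g (stdB 1)) 2 = Real.sin θ :=
    exists_cos_sin hcs
  refine ⟨θ, ?_⟩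
  ext i j
  rw [matrixOf_stdB_apply]
  fin_cases i <;> fin_cases j <;> simp [rotMat, hx, hy, hz, hp, hq, hc, hs, hcos, hsin]

end Coordinates

/-- The block matrix `1 ⊕ A`, as a homomorphism from `SO(2)` to `O(3)`. -/
def so2ToO3 : Matrix.specialOrthogonalGroup (Fin 2) ℝ →* unitary (Matrix (Fin 3) (Fin 3) ℝ) where
  toFun A := ⟨!![1, 0, 0; 0, A.1 0 0, A.1 0 1; 0, A.1 1 0, A.1 1 1], by
    obtain ⟨h1, h2, h3⟩ := Matrix.mem_specialOrthogonalGroup_fin_two_iff.1 A.2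
    rw [Unitary.mem_iff]
    constructor <;> ext i j <;> fin_cases i <;> fin_cases j <;>
      simp [Matrix.mul_apply, Fin.sum_univ_three, Matrix.star_apply] <;> grind⟩
  map_one' := by
    ext i j
    fin_cases i <;> fin_cases j <;> simp
  map_mul' A B := by
    ext i j
    fin_cases i <;> fin_cases j <;> simp [Matrix.mul_apply, Fin.sum_univ_two]

/-- The homomorphism sending `A ∈ SO(2)` to the isometry of `ℝ³` with matrix `1 ⊕ A`. -/
def so2Hom : Matrix.specialOrthogonalGroup (Fin 2) ℝ →* (V₃ ≃ₗᵢ[ℝ] V₃) :=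
  (Unitary.linearIsometryEquiv (𝕜 := ℝ) (H := V₃)).toMonoidHom.comp
    ((Unitary.map
      { (Matrix.toEuclideanCLM (n := Fin 3) (𝕜 := ℝ) :
          Matrix (Fin 3) (Fin 3) ℝ →* (V₃ →L[ℝ] V₃)) with
        map_star' := map_star (Matrix.toEuclideanCLM (n := Fin 3) (𝕜 := ℝ)) }).toMonoidHom.comp so2ToO3)

lemma matrixOf_so2Hom (A : Matrix.specialOrthogonalGroup (Fin 2) ℝ) :
    matrixOf stdB (so2Hom A) = !![1, 0, 0; 0, A.1 0 0, A.1 0 1; 0, A.1 1 0, A.1 1 1] := by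
  ext i j
  rw [matrixOf_stdB_apply]
  change (Matrix.mulVec (so2ToO3 A).1 (WithLp.ofLp (stdB j))) i = _
  simp [stdB, so2ToO3, EuclideanSpace.basisFun_apply]

lemma matrixOf_stdB_injective : Function.Injective (matrixOf stdB) := by
  intro g g' h
  ext X : 1
  rw [eq_sum_stdB X]
  have key : ∀ j, g (stdB j) = g' (stdB j) := fun j => by
    ext i
    rw [← matrixOf_stdB_apply, ← matrixOf_stdB_apply, h]
  simp only [map_add, map_smul, key]

lemma so2Hom_injective : Function.Injective so2Hom := by
  intro A B h
  have h' : matrixOf stdB (so2Hom A) = matrixOf stdB (so2Hom B) := by rw [h]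
  rw [matrixOf_so2Hom, matrixOf_so2Hom] at h'
  ext i j
  have := congrFun (congrFun h' i.succ) j.succ
  fin_cases i <;> fin_cases j <;> simpa using this

lemma range_so2Hom : Set.range so2Hom = rotSet stdB := by
  ext g
  constructor
  · rintro ⟨A, rfl⟩
    obtain ⟨h1, h2, h3⟩ := Matrix.mem_specialOrthogonalGroup_fin_two_iff.1 A.2
    obtain ⟨θ, hc, hs⟩ := exists_cos_sin (c := A.1 0 0) (s := A.1 1 0) (by
      rw [h2] at h3
      linarith)
    refine ⟨θ, ?_⟩
    rw [matrixOf_so2Hom, h2, ← h1, hc, hs, rotMat]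
  · rintro ⟨θ, hg⟩
    refine ⟨⟨!![Real.cos θ, -Real.sin θ; Real.sin θ, Real.cos θ], ?_⟩, ?_⟩
    · simp
    · apply matrixOf_stdB_injective
      rw [matrixOf_so2Hom, hg]
      simp [rotMat]

/-- if `(K,S)` is in `SO(2)`-canonical form with `λ > 0` in the standard
basis, then the stabilizer of `(K,S)` in `SO(3)` is exactly the group of all rotations
about the axis `e₁`, which is isomorphic to `SO(2)`. -/
theorem statement_8 (K : V₃ →ₗ[ℝ] V₃ →ₗ[ℝ] V₃) (S : V₃ →ₗ[ℝ] V₃)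
    (hK : IsAdmissibleK K) (hS : IsSymmEndo S)
    (lam a b : ℝ) (hlam : 0 < lam) (hform : SO2Form K S stdB lam a b) :
    stab K S = rotSet stdB ∧
    ∃ H : Subgroup (V₃ ≃ₗᵢ[ℝ] V₃), (H : Set (V₃ ≃ₗᵢ[ℝ] V₃)) = stab K S ∧
      Nonempty (H ≃* Matrix.specialOrthogonalGroup (Fin 2) ℝ) := by
  have hstab : stab K S = rotSet stdB :=
    (stab_subset_rotSet hK hlam hform).antisymm (rotSet_subset_stab hK hform)
  refine ⟨hstab, so2Hom.range, ?_, ⟨(MonoidHom.ofInjective so2Hom_injective).symm⟩⟩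
  rw [MonoidHom.coe_range, range_so2Hom, hstab]
end
end

section
/- Let V = ℝ³ with standard inner product h and standard basis {e₁,e₂,e₃}, and let λ, μ, a, b ∈ ℝ. Let K : V × V → V be the symmetric bilinear map with K(e₁,e₁)=2λe₁, K(e₁,e₂)=−λe₂, K(e₁,e₃)=−λe₃, K(e₂,e₂)=−λe₁+μe₂, K(e₂,e₃)=−μe₃, K(e₃,e₃)=−λe₁−μe₂, and let S : V → V be the linear map with Se₁=ae₁, Se₂=be₂, Se₃=be₃. Define R(X,Y)Z := (1/2)(h(Y,Z)SX − h(X,Z)SY + h(SY,Z)X − h(SX,Z)Y) − K(X,K(Y,Z)) + K(Y,K(X,Z)) and Ric(X,Y) := trace of the linear map Z ↦ R(Z,X)Y. Then Ric(e₁,e₁) = (a+b) + 6λ², Ric(e₁,e₂) = Ric(e₁,e₃) = Ric(e₂,e₃) = 0, and Ric(e₂,e₂) = Ric(e₃,e₃) = (1/2)a + (3/2)b + 2(λ² + μ²). -/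
/-!
Setting (affine hypersurfaces admitting a pointwise symmetry, algebraic part):
`V₃ = ℝ³` with its standard inner product `h = ⟪·,·⟫`.  `K` is a symmetric bilinear
map `V₃ × V₃ → V₃` whose cubic form `h(K(X,Y),Z)` is totally symmetric and which
satisfies the apolarity condition (`K_X` trace-free), `S` is an `h`-symmetric
endomorphism.  `stab K S` is the stabilizer of the pair `(K,S)` inside `SO(3)`.
-/

noncomputable section

open scoped RealInnerProductSpace

/-- The curvature tensor `R(X,Y)Z` given by the Gauss equation in terms of `K` and `S`:
`R(X,Y)Z = ½(h(Y,Z)SX − h(X,Z)SY + h(SY,Z)X − h(SX,Z)Y) − K_X K_Y Z + K_Y K_X Z`. -/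
def gaussCurv (K : V₃ →ₗ[ℝ] V₃ →ₗ[ℝ] V₃) (S : V₃ →ₗ[ℝ] V₃) (X Y Z : V₃) : V₃ :=
  (1/2 : ℝ) • (⟪Y, Z⟫ • S X - ⟪X, Z⟫ • S Y + ⟪S Y, Z⟫ • X - ⟪S X, Z⟫ • Y)
    - K X (K Y Z) + K Y (K X Z)

/-- The Ricci tensor `Ric(X,Y)`: the trace of the linear map `Z ↦ R(Z,X)Y`, computed as
the sum `∑ᵢ ⟪R(eᵢ,X)Y, eᵢ⟫` over the standard orthonormal basis. -/
def gaussRic (K : V₃ →ₗ[ℝ] V₃ →ₗ[ℝ] V₃) (S : V₃ →ₗ[ℝ] V₃) (X Y : V₃) : ℝ :=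
  ∑ i : Fin 3, ⟪gaussCurv K S (stdB i) X Y, stdB i⟫

/-- Lemma 4.1: the Ricci tensor of the Gauss-equation curvature tensor
of a pair `(K,S)` in `Z₃`-canonical form. -/
theorem statement_15 (K : V₃ →ₗ[ℝ] V₃ →ₗ[ℝ] V₃) (S : V₃ →ₗ[ℝ] V₃)
    (hKsymm : ∀ X Y, K X Y = K Y X)
    (lam mu a b : ℝ)
    (hK00 : K (stdB 0) (stdB 0) = (2*lam) • stdB 0)
    (hK01 : K (stdB 0) (stdB 1) = (-lam) • stdB 1)
    (hK02 : K (stdB 0) (stdB 2) = (-lam) • stdB 2)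
    (hK11 : K (stdB 1) (stdB 1) = (-lam) • stdB 0 + mu • stdB 1)
    (hK12 : K (stdB 1) (stdB 2) = (-mu) • stdB 2)
    (hK22 : K (stdB 2) (stdB 2) = (-lam) • stdB 0 + (-mu) • stdB 1)
    (hS0 : S (stdB 0) = a • stdB 0) (hS1 : S (stdB 1) = b • stdB 1)
    (hS2 : S (stdB 2) = b • stdB 2) :
    gaussRic K S (stdB 0) (stdB 0) = (a + b) + 6 * lam^2 ∧
    gaussRic K S (stdB 0) (stdB 1) = 0 ∧
    gaussRic K S (stdB 0) (stdB 2) = 0 ∧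
    gaussRic K S (stdB 1) (stdB 2) = 0 ∧
    gaussRic K S (stdB 1) (stdB 1) = (1/2) * a + (3/2) * b + 2 * (lam^2 + mu^2) ∧
    gaussRic K S (stdB 2) (stdB 2) = (1/2) * a + (3/2) * b + 2 * (lam^2 + mu^2) := by
  have hK10 : K (stdB 1) (stdB 0) = (-lam) • stdB 1 := by rw [hKsymm, hK01]
  have hK20 : K (stdB 2) (stdB 0) = (-lam) • stdB 2 := by rw [hKsymm, hK02]
  have hK21 : K (stdB 2) (stdB 1) = (-mu) • stdB 2 := by rw [hKsymm, hK12]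
  -- After expanding all `K` and `S` values in the basis, orthonormality turns each
  -- component into a polynomial identity in `lam`, `mu`, `a`, `b`.
  have hort : ∀ i j : Fin 3, ⟪stdB i, stdB j⟫ = if i = j then (1 : ℝ) else 0 :=
    orthonormal_iff_ite.mp stdB.orthonormal
  refine ⟨?_, ?_, ?_, ?_, ?_, ?_⟩ <;>
    simp only [gaussRic, gaussCurv, Fin.sum_univ_three, hK00, hK01, hK02, hK10, hK11, hK12,
      hK20, hK21, hK22, hS0, hS1, hS2, map_add, map_smul, inner_add_left, inner_sub_left,
      real_inner_smul_left, hort, Fin.reduceEq, if_true, if_false] <;>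
    ring
end
end

section
/- Let λ > 0 and μ, a, b, L₁, L₂, L₃, M₁, M₂, M₃, p, q, r₁, r₂, s₁, s₂, w, u, v be real numbers (where p = φ₁₁², q = φ₁₁³, r₁ = φ₂₁³, r₂ = φ₃₁², s₁ = φ₂₁², s₂ = φ₃₁³, w = φ₁₂³, u = φ₂₂³, v = φ₃₂³) satisfying: L₂ = 2λp; μq = 4λr₁; L₁ = (1/2)(b−a) − μp − 4λs₁; L₁ = (1/2)(b−a) + μp − 4λs₂; L₃ = 2λq; μq = 4λr₂; M₁ + L₂ = 3λp − μs₁; 0 = −λq + 3μw − μr₁; L₃ = −μ(r₁ + r₂); M₃ = 3μu − λ(r₁ − 3r₂); M₂ = −λ(s₁ − s₂) − 3μv; M₁ = −λp − μs₂; L₃ = 3λq + μ(3w + r₂); L₂ = μ(s₁ − s₂); M₃ = 3μu + λ(3r₁ − r₂); L₂ − M₁ = λp + μs₁; 4λ(r₁ − r₂) = 0; and L₃ = λq − μ(3w + r₂). Then p = q = r₁ = r₂ = 0, s₁ = s₂, L₁ = (1/2)(b−a) − 4λs₁, and L₂ = L₃ = 0. If moreover μ ≠ 0, then also w = 0, M₁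 = −μs₁, M₂ = −3μv and M₃ = 3μu. -/
/-!
Two pairs of equations are homogeneous `2 × 2` linear systems, in `(p, s1 - s2)` and in
`(q, r1 + r2)`, each with determinant `4 * lam ^ 2 + mu ^ 2`. As `lam > 0`, both have only the zero solution; the remaining claims follow by substitution.
-/

/-- Lemma 4.3: evaluation of the Codazzi equations for the difference
tensor of a 3-dimensional positive definite affine hypersurface admitting a pointwise
`SO(2)`- or `Z₃`-symmetry.  Here `L i = e i (λ)`, `M i = e i (μ)` and
`p = φ₁₁², q = φ₁₁³, r₁ = φ₂₁³, r₂ = φ₃₁², s₁ = φ₂₁², s₂ = φ₃₁³, w = φ₁₂³, u = φ₂₂³,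
v = φ₃₂³` are the Levi-Civita connection coefficients. -/
theorem statement_16 (lam mu a b L1 L2 L3 M1 M2 M3 p q r1 r2 s1 s2 w u v : ℝ)
    (hlam : 0 < lam)
    (e1 : L2 = 2 * lam * p)
    (e2 : mu * q = 4 * lam * r1)
    (e3 : L1 = (1/2) * (b - a) - mu * p - 4 * lam * s1)
    (e4 : L1 = (1/2) * (b - a) + mu * p - 4 * lam * s2)
    (e5 : L3 = 2 * lam * q)
    (e6 : mu * q = 4 * lam * r2)
    (e7 : M1 + L2 = 3 * lam * p - mu * s1)
    (e8 : 0 = -(lam * q) + 3 * mu * w - mu * r1)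
    (e9 : L3 = -mu * (r1 + r2))
    (e10 : M3 = 3 * mu * u - lam * (r1 - 3 * r2))
    (e11 : M2 = -lam * (s1 - s2) - 3 * mu * v)
    (e12 : M1 = -(lam * p) - mu * s2)
    (e13 : L3 = 3 * lam * q + mu * (3 * w + r2))
    (e14 : L2 = mu * (s1 - s2))
    (e15 : M3 = 3 * mu * u + lam * (3 * r1 - r2))
    (e16 : L2 - M1 = lam * p + mu * s1)
    (e17 : 4 * lam * (r1 - r2) = 0)
    (e18 : L3 = lam * q - mu * (3 * w + r2)) :
    p = 0 ∧ q = 0 ∧ r1 = 0 ∧ r2 = 0 ∧ s1 = s2 ∧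
    L1 = (1/2) * (b - a) - 4 * lam * s1 ∧ L2 = 0 ∧ L3 = 0 ∧
    (mu ≠ 0 → w = 0 ∧ M1 = -(mu * s1) ∧ M2 = -(3 * mu * v) ∧ M3 = 3 * mu * u) := by
  have hl : lam ≠ 0 := hlam.ne'
  have hdet : 4 * lam ^ 2 + mu ^ 2 ≠ 0 := by positivity
  -- Eliminate `s1 - s2` between `2 * lam * p = mu * (s1 - s2)` and
  -- `mu * p = -2 * lam * (s1 - s2)`.
  have hp : p = 0 := by
    have h : (4 * lam ^ 2 + mu ^ 2) * p = 0 := by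
      linear_combination 2 * lam * (e14 - e1) + mu / 2 * (e3 - e4)
    exact (mul_eq_zero.mp h).resolve_left hdet
  -- Eliminate `r1 + r2` between `2 * lam * q = -mu * (r1 + r2)` and
  -- `mu * q = 2 * lam * (r1 + r2)`.
  have hq : q = 0 := by
    have h : (4 * lam ^ 2 + mu ^ 2) * q = 0 := by
      linear_combination 2 * lam * (e9 - e5) + mu / 2 * (e2 + e6)
    exact (mul_eq_zero.mp h).resolve_left hdet
  subst hp hq
  have hr1 : r1 = 0 := mul_left_cancel₀ hl (by linear_combination -e2 / 4)
  have hr2 : r2 = 0 := mul_left_cancel₀ hl (by linear_combination -e6 / 4)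
  have hs : s1 = s2 := mul_left_cancel₀ hl (by linear_combination (e3 - e4) / 4)
  subst hr1 hr2 hs
  refine ⟨rfl, rfl, rfl, rfl, rfl, by linarith, by linarith, by linarith, fun hmu => ?_⟩
  exact ⟨mul_left_cancel₀ hmu (by linear_combination -e8 / 3), by linarith, by linarith,
    by linarith⟩
end

section
/- Let I ⊆ ℝ be an open interval and let a, b, η, λ, μ, f : I → ℝ be differentiable functions satisfying f′ = η, b′ = (λ − η)(b − a), η′ = −η² − 3λ² − (1/2)(a + b), λ′ = −4ηλ + (1/2)(b − a), and μ′ = −μη on I. Then the function t ↦ e^{2f(t)} (b(t) − λ(t)² + 2μ(t)² + η(t)²) is constant on I. -/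
/-!
Put `K = b − λ² + 2μ² + η²`. The structure equations give `K' = −2ηK`, while `f' = η` gives
`(e^{2f})' = 2η e^{2f}`. Hence `e^{2f} K` has zero derivative on `I`, and it is constant because
`I` is open and connected.
-/

/-- constancy of the fibre curvature, cf. (4.37): along the structure
equations of a 3-dimensional positive definite affine hypersurface with pointwise `SO(2)`-
or `Z₃`-symmetry, the quantity `e^{2f}(b − λ² + 2μ² + η²)` (the Gauss curvature of the
two-dimensional fibre) is constant. -/
theorem statement_19 (I : Set ℝ) (hIopen : IsOpen I) (hIinterval : Convex ℝ I)
    (a b η lam mu f : ℝ → ℝ)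
    (ha : ∀ t ∈ I, DifferentiableAt ℝ a t)
    (hf : ∀ t ∈ I, HasDerivAt f (η t) t)
    (hb : ∀ t ∈ I, HasDerivAt b ((lam t - η t) * (b t - a t)) t)
    (hη : ∀ t ∈ I, HasDerivAt η (-(η t)^2 - 3 * (lam t)^2 - (1/2) * (a t + b t)) t)
    (hlam : ∀ t ∈ I, HasDerivAt lam (-4 * η t * lam t + (1/2) * (b t - a t)) t)
    (hmu : ∀ t ∈ I, HasDerivAt mu (-(mu t) * η t) t) :
    ∀ s ∈ I, ∀ t ∈ I,
      Real.exp (2 * f s) * (b s - (lam s)^2 + 2 * (mu s)^2 + (η s)^2) =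
      Real.exp (2 * f t) * (b t - (lam t)^2 + 2 * (mu t)^2 + (η t)^2) := by
  have hderiv : ∀ x ∈ I, HasDerivAt
      (fun x => Real.exp (2 * f x) * (b x - (lam x)^2 + 2 * (mu x)^2 + (η x)^2)) 0 x := by
    intro x hx
    have hE := ((hf x hx).const_mul 2).exp
    have hK := (((hb x hx).sub ((hlam x hx).pow 2)).add (((hmu x hx).pow 2).const_mul 2)).add
      ((hη x hx).pow 2)
    refine (hE.mul hK).congr_deriv ?_
    simp only [Pi.add_apply, Pi.sub_apply, Pi.pow_apply]
    push_cast
    ring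
  intro s hs t ht
  exact hIopen.is_const_of_deriv_eq_zero hIinterval.isPreconnected
    (fun x hx => (hderiv x hx).differentiableAt.differentiableWithinAt)
    (fun x hx => (hderiv x hx).deriv) hs ht
end
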